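/- For all j ≥ 0 and all m ∈ S, the reduced simplicial homology groups over a field k satisfy H̃_j(∇_m) ≅ H̃_j(Δ_m). -/

import Mathlib

section SimplicialHomology

variable (k : Type) [Field k] {V : Type} [LinearOrder V]

/-- The (reduced) simplicial boundary operator on formal `k`-linear combinations of finite
subsets of the (linearly ordered) vertex set `V`, with the usual alternating signs. -/
noncomputable def sBoundary : (Finset V →₀ k) →ₗ[k] (Finset V →₀ k) :=
  Finsupp.lsum k fun F =>
    LinearMap.toSpanSingleton k _
      (∑ x ∈ F, ((-1 : k) ^ (F.filter (fun y => y < x)).card) •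
        Finsupp.single (F.erase x) (1 : k))

/-- The faces of cardinality `c` of the simplicial complex `K` (the empty face is always
included, so that the chain complex below computes *reduced* homology). -/
def sFaces (K : Set (Finset V)) (c : ℕ) : Set (Finset V) :=
  {F | F.card = c ∧ (F = ∅ ∨ F ∈ K)}

/-- The reduced `j`-cycles `Z̃_j(K)`: chains supported on the `j`-dimensional faces
(of cardinality `j+1`) killed by the boundary operator. -/
noncomputable def sCycles (K : Set (Finset V)) (j : ℕ) : Submodule k (Finset V →₀ k) :=
  Finsupp.supported k k (sFaces K (j + 1)) ⊓ LinearMap.ker (sBoundary k)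

/-- The reduced `j`-boundaries `B̃_j(K)`: images under the boundary operator of chains
supported on the `(j+1)`-dimensional faces (of cardinality `j+2`). -/
noncomputable def sBoundaries (K : Set (Finset V)) (j : ℕ) : Submodule k (Finset V →₀ k) :=
  Submodule.map (sBoundary k) (Finsupp.supported k k (sFaces K (j + 2)))

/-- The reduced `j`-th simplicial homology `H̃_j(K) = Z̃_j(K)/B̃_j(K)` of `K` with
coefficients in `k`, realized as the image of the cycles in the quotient of the chain
space by the boundaries. -/
noncomputable def sHred (K : Set (Finset V)) (j : ℕ) :
    Submodule k ((Finset V →₀ k) ⧸ sBoundaries k K j) :=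
  Submodule.map (sBoundaries k K j).mkQ (sCycles k K j)

end SimplicialHomology

/-- The simplicial complex `∇_m` on the vertex set `C_m ⊆ ℕ^r` (with the lexicographic
linear order on vertices): nonempty subsets of factorizations of `m` whose componentwise
minimum is nonzero, i.e. whose monomials have a nontrivial common divisor. -/
def nablaLex {G : Type} [AddCommGroup G] {r : ℕ} (n : Fin r → G) (m : G) :
    Set (Finset (Lex (Fin r →₀ ℕ))) :=
  {F | F.Nonempty ∧ (∀ a ∈ F, ((ofLex a).sum fun i e => e • n i) = m) ∧
    ∃ i, ∀ a ∈ F, 0 < ofLex a i}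

/-- The simplicial complex `Δ_m` on the vertex set `{1,…,r}`: nonempty subsets `F` with
`m − n_F ∈ S`. -/
def deltaComplex {G : Type} [AddCommGroup G] (S : AddSubmonoid G) {r : ℕ} (n : Fin r → G)
    (m : G) : Set (Finset (Fin r)) :=
  {F | F.Nonempty ∧ ∃ s ∈ S, (∑ i ∈ F, n i) + s = m}

section DowkerHelpers

variable (k : Type) [Field k] {V : Type} [LinearOrder V]

/-- The sign attached to a vertex relative to a finite set. -/
noncomputable def sgnE (x : V) (F : Finset V) : k :=
  (-1 : k) ^ (F.filter (fun y => y < x)).card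

lemma sgnE_mul_self (x : V) (F : Finset V) : sgnE k x F * sgnE k x F = 1 := by
  unfold sgnE
  rw [← mul_pow]; simp

lemma sgnE_erase_self (x : V) (F : Finset V) : sgnE k x (F.erase x) = sgnE k x F := by
  unfold sgnE
  congr 2
  ext y
  simp only [Finset.mem_filter, Finset.mem_erase]
  exact ⟨fun h => ⟨h.1.2, h.2⟩, fun h => ⟨⟨ne_of_lt h.2, h.1⟩, h.2⟩⟩

lemma sgnE_insert_self (x : V) (F : Finset V) : sgnE k x (insert x F) = sgnE k x F := by
  unfold sgnE
  congr 2
  ext y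
  simp only [Finset.mem_filter, Finset.mem_insert]
  exact ⟨fun h => ⟨h.1.resolve_left (ne_of_lt h.2), h.2⟩, fun h => ⟨Or.inr h.1, h.2⟩⟩

lemma sgnE_insert_lt {v x : V} {F : Finset V} (hv : v ∉ F) (h : v < x) :
    sgnE k x (insert v F) = - sgnE k x F := by
  unfold sgnE
  rw [Finset.filter_insert, if_pos h, Finset.card_insert_of_notMem (by simp [hv]), pow_succ]
  simp

lemma sgnE_insert_gt {v x : V} {F : Finset V} (h : x < v) :
    sgnE k x (insert v F) = sgnE k x F := by
  unfold sgnE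
  rw [Finset.filter_insert, if_neg (not_lt.mpr h.le)]

lemma sgnE_swap {v x : V} {F : Finset V} (hv : v ∉ F) (hx : x ∈ F) :
    sgnE k v F * sgnE k x (insert v F) + sgnE k x F * sgnE k v (F.erase x) = 0 := by
  have hne : x ≠ v := fun h => hv (h ▸ hx)
  have hF : insert x (F.erase x) = F := Finset.insert_erase hx
  rcases lt_or_gt_of_ne hne with h | h
  · rw [sgnE_insert_gt k h]
    have := sgnE_insert_lt k (Finset.notMem_erase x F) h
    rw [hF] at this
    rw [this]; ring
  · rw [sgnE_insert_lt k hv h]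
    have := sgnE_insert_gt k (F := F.erase x) h
    rw [hF] at this
    rw [this]; ring

lemma sBoundary_single (F : Finset V) :
    sBoundary k (Finsupp.single F (1 : k)) =
      ∑ x ∈ F, sgnE k x F • Finsupp.single (F.erase x) (1 : k) := by
  simp [sBoundary, sgnE]

/-- Cone operator with apex `v`. -/
noncomputable def coneOp (v : V) : (Finset V →₀ k) →ₗ[k] (Finset V →₀ k) :=
  Finsupp.lsum k fun F =>
    LinearMap.toSpanSingleton k _
      (if v ∈ F then 0 else sgnE k v F • Finsupp.single (insert v F) (1 : k))

lemma coneOp_single (v : V) (F : Finset V) :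
    coneOp k v (Finsupp.single F (1 : k)) =
      if v ∈ F then 0 else sgnE k v F • Finsupp.single (insert v F) (1 : k) := by
  simp [coneOp]

lemma cone_homotopy (v : V) (F : Finset V) :
    sBoundary k (coneOp k v (Finsupp.single F (1 : k))) +
      coneOp k v (sBoundary k (Finsupp.single F (1 : k))) = Finsupp.single F (1 : k) := by
  by_cases hv : v ∈ F
  · rw [coneOp_single, if_pos hv, map_zero, zero_add, sBoundary_single, map_sum,
      Finset.sum_eq_single v]
    · rw [map_smul, coneOp_single, if_neg (Finset.notMem_erase v F), sgnE_erase_self, smul_smul,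
        sgnE_mul_self, one_smul, Finset.insert_erase hv]
    · intro x hx hne
      rw [map_smul, coneOp_single, if_pos (Finset.mem_erase.mpr ⟨hne.symm, hv⟩), smul_zero]
    · intro h; exact absurd hv h
  · rw [coneOp_single, if_neg hv, map_smul, sBoundary_single, sBoundary_single,
      Finset.sum_insert hv, smul_add, sgnE_insert_self, smul_smul, sgnE_mul_self, one_smul,
      Finset.erase_insert hv, add_assoc, map_sum, Finset.smul_sum, ← Finset.sum_add_distrib,
      Finset.sum_eq_zero, add_zero]
    intro x hx
    have hne : x ≠ v := fun h => hv (h ▸ hx)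
    rw [map_smul, coneOp_single, if_neg (fun h => hv (Finset.mem_of_mem_erase h)), smul_smul,
      smul_smul, Finset.erase_insert_of_ne hne.symm, ← add_smul, sgnE_swap k hv hx, zero_smul]

lemma cone_homotopy' (v : V) (c : Finset V →₀ k) :
    sBoundary k (coneOp k v c) + coneOp k v (sBoundary k c) = c := by
  have : (sBoundary k ∘ₗ coneOp k v + coneOp k v ∘ₗ sBoundary k) =
      (LinearMap.id : (Finset V →₀ k) →ₗ[k] _) := by
    apply Finsupp.lhom_ext'
    intro F
    apply LinearMap.ext_ring
    simpa using cone_homotopy k v F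
  simpa using congrArg (fun g => g c) this

lemma sBoundary_sq (c : Finset V →₀ k) : sBoundary k (sBoundary k c) = 0 := by
  have : (sBoundary k ∘ₗ sBoundary k) = (0 : (Finset V →₀ k) →ₗ[k] (Finset V →₀ k)) := by
    apply Finsupp.lhom_ext'
    intro F
    apply LinearMap.ext_ring
    simp only [LinearMap.comp_apply, Finsupp.lsingle_apply, LinearMap.zero_apply]
    induction F using Finset.induction_on with
    | empty => simp [sBoundary_single]
    | insert v F hv ih =>
      have h1 : Finsupp.single (insert v F) (1 : k) =
          sgnE k v F • coneOp k v (Finsupp.single F (1 : k)) := by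
        rw [coneOp_single, if_neg hv, smul_smul, sgnE_mul_self, one_smul]
      have h2 := cone_homotopy' k v (Finsupp.single F (1 : k))
      have h3 := cone_homotopy' k v (sBoundary k (Finsupp.single F (1 : k)))
      rw [ih, map_zero, add_zero] at h3
      have h4 := congrArg (sBoundary k) h2
      rw [map_add, h3] at h4
      rw [h1, map_smul, map_smul, add_eq_right.mp h4, smul_zero]
  simpa using congrArg (fun g => g c) this

open Classical in
/-- The part of `F` satisfying `P`. -/
noncomputable def pPart (P : V → Prop) (F : Finset V) : Finset V := F.filter P

open Classical in
/-- The contracting operator. -/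
noncomputable def contrOp (P : V → Prop) (f : Finset V → V) :
    (Finset V →₀ k) →ₗ[k] (Finset V →₀ k) :=
  Finsupp.lsum k fun F =>
    LinearMap.toSpanSingleton k _
      (if pPart P F = ∅ then 0 else coneOp k (f (pPart P F)) (Finsupp.single F (1 : k)))

open Classical in
lemma contrOp_single (P : V → Prop) (f : Finset V → V) (F : Finset V) :
    contrOp k P f (Finsupp.single F (1 : k)) =
      if pPart P F = ∅ then 0 else coneOp k (f (pPart P F)) (Finsupp.single F (1 : k)) := by
  simp [contrOp]

lemma mem_pPart {P : V → Prop} {F : Finset V} {x : V} : x ∈ pPart P F ↔ x ∈ F ∧ P x := by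
  simp [pPart]

lemma map_supported_le {s : Set (Finset V)} (φ : (Finset V →₀ k) →ₗ[k] (Finset V →₀ k))
    (W : Submodule k (Finset V →₀ k)) (h : ∀ F ∈ s, φ (Finsupp.single F 1) ∈ W)
    {c : Finset V →₀ k} (hc : c ∈ Finsupp.supported k k s) : φ c ∈ W := by
  have : Finsupp.supported k k s ≤ W.comap φ := by
    rw [Finsupp.supported_eq_span_single, Submodule.span_le]
    rintro _ ⟨F, hF, rfl⟩
    exact h F hF
  exact this hc

/-- Faces with `P`-part of size at most `N`. -/
def bFaces (P : V → Prop) (J : Set (Finset V)) (c N : ℕ) : Set (Finset V) :=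
  {F | F ∈ sFaces J c ∧ (pPart P F).card ≤ N}

lemma pPart_insert {P : V → Prop} {v : V} (hv : ¬ P v) (F : Finset V) :
    pPart P (insert v F) = pPart P F := by
  classical
  unfold pPart
  ext y
  simp only [Finset.mem_filter, Finset.mem_insert]
  constructor
  · rintro ⟨rfl | h, h2⟩
    · exact absurd h2 hv
    · exact ⟨h, h2⟩
  · exact fun h => ⟨Or.inr h.1, h.2⟩

lemma pPart_erase {P : V → Prop} {v : V} (hv : ¬ P v) (F : Finset V) :
    pPart P (F.erase v) = pPart P F := by
  classical
  unfold pPart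
  ext y
  simp only [Finset.mem_filter, Finset.mem_erase]
  constructor
  · rintro ⟨⟨h1, h⟩, h2⟩
    exact ⟨h, h2⟩
  · rintro ⟨h, h2⟩
    exact ⟨⟨fun h3 => hv (h3 ▸ h2), h⟩, h2⟩

lemma pPart_erase_card {P : V → Prop} {v : V} (hv : P v) {F : Finset V} (hF : v ∈ F) :
    (pPart P (F.erase v)).card + 1 = (pPart P F).card := by
  classical
  have : pPart P (F.erase v) = (pPart P F).erase v := by
    unfold pPart
    ext y
    simp only [Finset.mem_filter, Finset.mem_erase]
    tauto
  rw [this, Finset.card_erase_add_one]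
  simp [pPart, hF, hv]

lemma pPart_subset (P : V → Prop) (F : Finset V) : pPart P F ⊆ F := by
  classical
  exact Finset.filter_subset _ _

lemma cone_mem {P : V → Prop} {J : Set (Finset V)} {v : V} (hv : ¬ P v) {F : Finset V} {c N : ℕ}
    (hc : F.card + 1 = c) (hN : (pPart P F).card ≤ N) (hJ : insert v F ∈ J) :
    coneOp k v (Finsupp.single F (1 : k)) ∈ Finsupp.supported k k (bFaces P J c N) := by
  rw [coneOp_single]
  split_ifs with h
  · exact Submodule.zero_mem _
  · apply Submodule.smul_mem
    apply Finsupp.single_mem_supported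
    exact ⟨⟨by rw [Finset.card_insert_of_notMem h, hc], Or.inr hJ⟩, by rwa [pPart_insert hv]⟩

lemma contrOp_mem {P : V → Prop} {J : Set (Finset V)}
    (f : Finset V → V)
    (hf : ∀ F ∈ J, (pPart P F).Nonempty → ¬ P (f (pPart P F)) ∧ insert (f (pPart P F)) F ∈ J)
    {F : Finset V} {c N : ℕ} (hF : F ∈ bFaces P J c N) :
    contrOp k P f (Finsupp.single F (1 : k)) ∈ Finsupp.supported k k (bFaces P J (c + 1) N) := by
  classical
  rw [contrOp_single]
  split_ifs with h
  · exact Submodule.zero_mem _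
  · have hne := Finset.nonempty_iff_ne_empty.mpr h
    have hFJ : F ∈ J := hF.1.2.resolve_left (fun h0 => by
      subst h0; exact h (by simp [pPart]))
    obtain ⟨h1, h2⟩ := hf F hFJ hne
    exact cone_mem k h1 (congrArg (· + 1) hF.1.1) hF.2 h2

lemma contr_step {P : V → Prop} {J : Set (Finset V)}
    (hdown : ∀ F ∈ J, ∀ G ⊆ F, G.Nonempty → G ∈ J)
    (f : Finset V → V)
    (hf : ∀ F ∈ J, (pPart P F).Nonempty → ¬ P (f (pPart P F)) ∧ insert (f (pPart P F)) F ∈ J)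
    {F : Finset V} {c N : ℕ} (hF : F ∈ bFaces P J c (N + 1)) :
    sBoundary k (contrOp k P f (Finsupp.single F (1 : k))) +
      contrOp k P f (sBoundary k (Finsupp.single F (1 : k))) - Finsupp.single F (1 : k) ∈
      Finsupp.supported k k (bFaces P J c N) := by
  classical
  by_cases h : pPart P F = ∅
  · have h0 : contrOp k P f (Finsupp.single F (1 : k)) = 0 := by
      rw [contrOp_single, if_pos h]
    have h1 : contrOp k P f (sBoundary k (Finsupp.single F (1 : k))) = 0 := by
      rw [sBoundary_single, map_sum]
      apply Finset.sum_eq_zero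
      intro x hx
      rw [map_smul, contrOp_single, if_pos, smul_zero]
      apply Finset.subset_empty.mp
      rw [← h]
      exact Finset.filter_subset_filter _ (Finset.erase_subset _ _)
    rw [h0, h1, map_zero, zero_add, zero_sub]
    apply Submodule.neg_mem
    apply Finsupp.single_mem_supported
    exact ⟨hF.1, by rw [h]; simp⟩
  · have hne := Finset.nonempty_iff_ne_empty.mpr h
    have hFJ : F ∈ J := hF.1.2.resolve_left (fun h0 => by
      subst h0; exact h (by simp [pPart]))
    obtain ⟨h1, h2⟩ := hf F hFJ hne
    set v := f (pPart P F) with hv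
    have hH : contrOp k P f (Finsupp.single F (1 : k)) = coneOp k v (Finsupp.single F (1 : k)) := by
      rw [contrOp_single, if_neg h]
    have hcone := cone_homotopy k v F
    have key : sBoundary k (contrOp k P f (Finsupp.single F (1 : k))) +
        contrOp k P f (sBoundary k (Finsupp.single F (1 : k))) - Finsupp.single F (1 : k) =
        contrOp k P f (sBoundary k (Finsupp.single F (1 : k))) -
        coneOp k v (sBoundary k (Finsupp.single F (1 : k))) := by
      rw [hH]
      nth_rewrite 3 [← hcone]
      abel
    rw [key, sBoundary_single, map_sum, map_sum, ← Finset.sum_sub_distrib]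
    apply Submodule.sum_mem
    intro x hx
    rw [map_smul, map_smul, ← smul_sub]
    apply Submodule.smul_mem
    by_cases hP : P x
    · have hcard := pPart_erase_card hP hx
      have hle : (pPart P (F.erase x)).card ≤ N := by have := hF.2; omega
      have hFc := Finset.card_erase_add_one hx
      rw [hF.1.1] at hFc
      apply Submodule.sub_mem
      · have := contrOp_mem k f hf (F := F.erase x) (c := (F.erase x).card) (N := N) (by
          refine ⟨⟨rfl, ?_⟩, hle⟩
          rcases Finset.eq_empty_or_nonempty (F.erase x) with h0 | h0
          · exact Or.inl h0
          · exact Or.inr (hdown F hFJ _ (Finset.erase_subset _ _) h0))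
        rwa [hFc] at this
      · exact cone_mem k h1 hFc hle (hdown _ h2 _
          (Finset.insert_subset_insert _ (Finset.erase_subset _ _)) (Finset.insert_nonempty _ _))
    · have hp := pPart_erase hP F
      rw [contrOp_single, hp, if_neg h, sub_self]
      exact Submodule.zero_mem _

lemma rel_acyclic_aux {P : V → Prop} {J : Set (Finset V)}
    (hdown : ∀ F ∈ J, ∀ G ⊆ F, G.Nonempty → G ∈ J)
    (f : Finset V → V)
    (hf : ∀ F ∈ J, (pPart P F).Nonempty → ¬ P (f (pPart P F)) ∧ insert (f (pPart P F)) F ∈ J)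
    (j N : ℕ) : ∀ c ∈ Finsupp.supported k k (bFaces P J (j + 1) N),
    sBoundary k c ∈ Finsupp.supported k k {F | pPart P F = ∅} →
    ∃ d ∈ Finsupp.supported k k (sFaces J (j + 2)),
      ∃ l ∈ Finsupp.supported k k (bFaces P J (j + 1) 0), c = sBoundary k d + l := by
  classical
  induction N with
  | zero =>
    intro c hc _
    exact ⟨0, Submodule.zero_mem _, c, hc, by simp⟩
  | succ N ih =>
    intro c hc hb
    have h0 : contrOp k P f (sBoundary k c) = 0 := by
      have := map_supported_le k (contrOp k P f) ⊥ (s := {F | pPart P F = ∅}) (by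
        intro F hF
        have hF' : pPart P F = ∅ := hF
        rw [contrOp_single, if_pos hF']
        exact Submodule.zero_mem _) hb
      simpa using this
    have hd : contrOp k P f c ∈ Finsupp.supported k k (sFaces J (j + 2)) :=
      map_supported_le k (contrOp k P f) _ (fun F hF =>
        Finsupp.supported_mono (fun G hG => hG.1) (contrOp_mem k f hf hF)) hc
    have he : sBoundary k (contrOp k P f c) - c ∈ Finsupp.supported k k (bFaces P J (j + 1) N) := by
      have := map_supported_le k (sBoundary k ∘ₗ contrOp k P f + contrOp k P f ∘ₗ sBoundary k
        - LinearMap.id) _ (fun F hF => by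
          simpa using contr_step k hdown f hf hF) hc
      simpa [h0] using this
    obtain ⟨d, hd', l, hl, hdl⟩ := ih _ he (by
      rw [map_sub, sBoundary_sq, zero_sub]
      exact Submodule.neg_mem _ hb)
    refine ⟨contrOp k P f c - d, Submodule.sub_mem _ hd hd', -l, Submodule.neg_mem _ hl, ?_⟩
    rw [map_sub, ← sub_eq_add_neg, sub_sub, ← hdl]
    abel

lemma rel_acyclic {P : V → Prop} {J : Set (Finset V)}
    (hdown : ∀ F ∈ J, ∀ G ⊆ F, G.Nonempty → G ∈ J)
    (hf : ∀ S : Finset V, S.Nonempty → S ∈ J → ∃ v, ¬ P v ∧ ∀ F ∈ J, pPart P F = S →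
      insert v F ∈ J) (j : ℕ) (c) (hc : c ∈ Finsupp.supported k k (sFaces J (j + 1)))
    (hb : sBoundary k c ∈ Finsupp.supported k k {F | pPart P F = ∅}) :
    ∃ d ∈ Finsupp.supported k k (sFaces J (j + 2)),
      ∃ l ∈ Finsupp.supported k k (bFaces P J (j + 1) 0), c = sBoundary k d + l := by
  classical
  rcases isEmpty_or_nonempty V with hV | hV
  · have hsub : sFaces J (j + 1) ⊆ bFaces P J (j + 1) 0 := fun F hF => ⟨hF, by
      rw [Finset.eq_empty_of_isEmpty (pPart P F)]; simp⟩
    exact ⟨0, Submodule.zero_mem _, c, Finsupp.supported_mono hsub hc, by simp⟩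
  · have hf' : ∀ S : Finset V, ∃ v, S.Nonempty → S ∈ J → ¬ P v ∧ ∀ F ∈ J, pPart P F = S →
      insert v F ∈ J := by
      intro S
      by_cases h : S.Nonempty ∧ S ∈ J
      · obtain ⟨v, hv⟩ := hf S h.1 h.2
        exact ⟨v, fun _ _ => hv⟩
      · exact ⟨Classical.arbitrary V, fun h1 h2 => absurd ⟨h1, h2⟩ h⟩
    choose f hf2 using hf'
    refine rel_acyclic_aux k hdown f ?_ j (j + 1) c (Finsupp.supported_mono ?_ hc) hb
    · intro F hF hne
      have := hf2 _ hne (hdown F hF _ (pPart_subset P F) hne)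
      exact ⟨this.1, this.2 F hF rfl⟩
    · intro F hF
      refine ⟨hF, ?_⟩
      rw [← hF.1]
      exact Finset.card_le_card (pPart_subset P F)

/-- The chain map induced by an order embedding. -/
noncomputable def chainMap {X : Type} [LinearOrder X] (e : X ↪o V) :
    (Finset X →₀ k) →ₗ[k] (Finset V →₀ k) :=
  Finsupp.lmapDomain k k (Finset.map e.toEmbedding)

lemma chainMap_single {X : Type} [LinearOrder X] (e : X ↪o V) (F : Finset X) :
    chainMap k e (Finsupp.single F (1 : k)) = Finsupp.single (F.map e.toEmbedding) 1 := by
  simp [chainMap, Finsupp.mapDomain_single]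

lemma chainMap_inj {X : Type} [LinearOrder X] (e : X ↪o V) :
    Function.Injective (chainMap k e) :=
  Finsupp.mapDomain_injective (Finset.map_injective _)

lemma chainMap_comm {X : Type} [LinearOrder X] (e : X ↪o V) (c : Finset X →₀ k) :
    sBoundary k (chainMap k e c) = chainMap k e (sBoundary k c) := by
  have : (sBoundary k ∘ₗ chainMap k e) = chainMap k e ∘ₗ sBoundary k := by
    apply Finsupp.lhom_ext'
    intro F
    apply LinearMap.ext_ring
    simp only [LinearMap.comp_apply, Finsupp.lsingle_apply]
    rw [chainMap_single, sBoundary_single, sBoundary_single, map_sum, Finset.sum_map]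
    apply Finset.sum_congr rfl
    intro x hx
    rw [map_smul, chainMap_single, Finset.map_erase]
    congr 1
    unfold sgnE
    congr 1
    rw [Finset.filter_map, Finset.card_map]
    congr 1
    ext y
    simp
  exact congrArg (fun g => g c) this

lemma map_chainMap {X : Type} [LinearOrder X] (e : X ↪o V) (s : Set (Finset X)) :
    (Finsupp.supported k k s).map (chainMap k e) =
      Finsupp.supported k k (Finset.map e.toEmbedding '' s) :=
  Finsupp.lmapDomain_supported _ _ _ _

lemma sHred_iso {X : Type} [LinearOrder X] (e : X ↪o V) (K : Set (Finset X)) (J : Set (Finset V))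
    (hKJ : ∀ F : Finset X, F.map e.toEmbedding ∈ J ↔ F ∈ K)
    (hdown : ∀ F ∈ J, ∀ G ⊆ F, G.Nonempty → G ∈ J)
    (hf : ∀ S : Finset V, S.Nonempty → S ∈ J → ∃ x, ∀ F ∈ J, pPart (· ∉ Set.range e) F = S →
      insert (e x) F ∈ J) (j : ℕ) :
    Nonempty (↥(sHred k K j) ≃ₗ[k] ↥(sHred k J j)) := by
  classical
  set φ := chainMap k e with hφ
  have hsup : ∀ i, ∀ c ∈ Finsupp.supported k k (sFaces K i),
      φ c ∈ Finsupp.supported k k (sFaces J i) := by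
    intro i c hc
    have h1 : φ c ∈ (Finsupp.supported k k (sFaces K i)).map φ := ⟨c, hc, rfl⟩
    rw [map_chainMap] at h1
    refine Finsupp.supported_mono ?_ h1
    rintro _ ⟨F, hF, rfl⟩
    refine ⟨by rw [Finset.card_map, hF.1], ?_⟩
    rcases hF.2 with h | h
    · left; simp [h]
    · right; exact (hKJ F).mpr h
  have hlift : ∀ i, ∀ l ∈ Finsupp.supported k k (bFaces (· ∉ Set.range e) J i 0),
      ∃ c ∈ Finsupp.supported k k (sFaces K i), φ c = l := by
    intro i l hl
    have : l ∈ (Finsupp.supported k k (sFaces K i)).map φ := by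
      rw [map_chainMap]
      refine Finsupp.supported_mono ?_ hl
      intro G hG
      have h0 : pPart (· ∉ Set.range e) G = ∅ := Finset.card_eq_zero.mp (Nat.le_zero.mp hG.2)
      obtain ⟨F, rfl⟩ : ∃ F : Finset X, F.map e.toEmbedding = G := by
        have : (G : Set V) ⊆ e.toEmbedding '' Set.univ := by
          intro x hx
          by_contra hx'
          have : x ∈ pPart (· ∉ Set.range e) G := by
            rw [mem_pPart]
            exact ⟨hx, by simpa using hx'⟩
          rw [h0] at this
          simp at this
        obtain ⟨F, _, hF⟩ := Finset.subset_set_image_iff.mp this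
        exact ⟨F, by rw [Finset.map_eq_image]; exact hF⟩
      refine ⟨F, ⟨by simpa using hG.1.1, ?_⟩, rfl⟩
      rcases hG.1.2 with h | h
      · left; simpa using h
      · right; exact (hKJ F).mp h
    simpa using this
  have hkerP : ∀ c : Finset X →₀ k, φ c ∈
      Finsupp.supported k k {F | pPart (· ∉ Set.range e) F = ∅} := by
    intro c
    have h1 : φ c ∈ (Finsupp.supported k k Set.univ).map φ := ⟨c, by simp, rfl⟩
    rw [map_chainMap] at h1
    refine Finsupp.supported_mono ?_ h1
    rintro _ ⟨F, hF, rfl⟩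
    simp [pPart, Finset.filter_eq_empty_iff]
  have hacyc := rel_acyclic k (P := (· ∉ Set.range e)) hdown (by
    intro S h1 h2
    obtain ⟨x, hx⟩ := hf S h1 h2
    exact ⟨e x, by simp, hx⟩) j
  have hB : sBoundaries k K j ≤ (sBoundaries k J j).comap φ := by
    rintro _ ⟨d, hd, rfl⟩
    exact ⟨φ d, hsup _ d hd, chainMap_comm k e d⟩
  have hZ : ∀ z ∈ sCycles k K j, φ z ∈ sCycles k J j := by
    intro z hz
    refine ⟨hsup _ z hz.1, ?_⟩
    have : sBoundary k z = 0 := hz.2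
    change sBoundary k (φ z) = 0
    rw [chainMap_comm, this, map_zero]
  let Φ := Submodule.mapQ _ _ φ hB
  have hΦ : ∀ x ∈ sHred k K j, Φ x ∈ sHred k J j := by
    rintro _ ⟨z, hz, rfl⟩
    exact ⟨φ z, hZ z hz, rfl⟩
  refine ⟨LinearEquiv.ofBijective (Φ.restrict hΦ) ⟨?_, ?_⟩⟩
  · rw [injective_iff_map_eq_zero]
    rintro ⟨_, ⟨z, hz, rfl⟩⟩ h
    have h' : Φ ((sBoundaries k K j).mkQ z) = 0 := congrArg Subtype.val h
    have h2 : φ z ∈ sBoundaries k J j := by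
      rw [← Submodule.Quotient.mk_eq_zero]
      exact h'
    obtain ⟨d, hd, hdz⟩ := h2
    have hacyc' := rel_acyclic k (P := (· ∉ Set.range e)) hdown (by
      intro S h1 h2
      obtain ⟨x, hx⟩ := hf S h1 h2
      exact ⟨e x, by simp, hx⟩) (j + 1) d hd (by rw [hdz]; exact hkerP z)
    obtain ⟨d', hd', l, hl, hdl⟩ := hacyc'
    obtain ⟨c, hc, rfl⟩ := hlift _ l hl
    apply Subtype.ext
    change (sBoundaries k K j).mkQ z = 0
    rw [Submodule.mkQ_apply, Submodule.Quotient.mk_eq_zero]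
    refine ⟨c, hc, chainMap_inj k e ?_⟩
    rw [← chainMap_comm, ← hφ, ← hdz, hdl, map_add, sBoundary_sq, zero_add]
  · rintro ⟨_, ⟨z, hz, rfl⟩⟩
    have hz0 : sBoundary k z = 0 := hz.2
    obtain ⟨d, hd, l, hl, hdl⟩ := hacyc z hz.1 (by rw [hz0]; exact Submodule.zero_mem _)
    obtain ⟨c, hc, rfl⟩ := hlift _ l hl
    have hcz : c ∈ sCycles k K j := by
      refine ⟨hc, ?_⟩
      change sBoundary k c = 0
      apply chainMap_inj k e
      rw [map_zero, ← chainMap_comm, ← hz0, hdl, map_add, sBoundary_sq, zero_add]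
    refine ⟨⟨(sBoundaries k K j).mkQ c, ⟨c, hcz, rfl⟩⟩, ?_⟩
    apply Subtype.ext
    change (sBoundaries k J j).mkQ (φ c) = (sBoundaries k J j).mkQ z
    rw [← sub_eq_zero, ← map_sub, Submodule.mkQ_apply, Submodule.Quotient.mk_eq_zero]
    refine ⟨-d, Submodule.neg_mem _ hd, ?_⟩
    rw [map_neg, hdl]; abel

end DowkerHelpers

section Dowker

variable (k : Type) [Field k] {X Y : Type} [LinearOrder X] [LinearOrder Y] (R : X → Y → Prop)

/-- The Dowker complex of a relation. -/
def dowkerC {X Y : Type} (R : X → Y → Prop) : Set (Finset X) :=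
  {F | F.Nonempty ∧ ∃ y, ∀ x ∈ F, R x y}

/-- The joint complex of a relation. -/
def joinC : Set (Finset (X ⊕ₗ Y)) :=
  {G | G.Nonempty ∧ (∀ x y, Sum.inlₗ x ∈ G → Sum.inrₗ y ∈ G → R x y) ∧
    (∃ y, ∀ x, Sum.inlₗ x ∈ G → R x y) ∧ (∃ x, ∀ y, Sum.inrₗ y ∈ G → R x y)}

/-- Left order embedding. -/
def embL : X ↪o X ⊕ₗ Y := ⟨⟨Sum.inlₗ, fun a b h => Sum.inl_injective (toLex.injective h)⟩,
  Sum.Lex.inl_le_inl_iff⟩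

/-- Right order embedding. -/
def embR : Y ↪o X ⊕ₗ Y := ⟨⟨Sum.inrₗ, fun a b h => Sum.inr_injective (toLex.injective h)⟩,
  Sum.Lex.inr_le_inr_iff⟩

lemma joinC_down : ∀ F ∈ joinC R, ∀ G ⊆ F, G.Nonempty → G ∈ joinC R := by
  rintro F ⟨_, h1, ⟨y, h2⟩, ⟨x, h3⟩⟩ G hG hne
  exact ⟨hne, fun a b ha hb => h1 a b (hG ha) (hG hb), ⟨y, fun a ha => h2 a (hG ha)⟩,
    ⟨x, fun b hb => h3 b (hG hb)⟩⟩

lemma embL_apply (x : X) : (embL x : X ⊕ₗ Y) = Sum.inlₗ x := rfl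
lemma embR_apply (y : Y) : (embR y : X ⊕ₗ Y) = Sum.inrₗ y := rfl

lemma inl_ne_inr' (x : X) (y : Y) : (Sum.inlₗ x : X ⊕ₗ Y) ≠ Sum.inrₗ y := by
  intro h
  have := congrArg ofLex h
  simp at this

lemma inl_inj' {x x' : X} : (Sum.inlₗ x : X ⊕ₗ Y) = Sum.inlₗ x' ↔ x = x' :=
  (embL (X := X) (Y := Y)).injective.eq_iff

lemma inr_inj' {x x' : Y} : (Sum.inrₗ x : X ⊕ₗ Y) = Sum.inrₗ x' ↔ x = x' :=
  (embR (X := X) (Y := Y)).injective.eq_iff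

lemma dowker_left (j : ℕ) :
    Nonempty (↥(sHred k (dowkerC R) j) ≃ₗ[k] ↥(sHred k (joinC R) j)) := by
  classical
  apply sHred_iso k embL _ _ _ (joinC_down R)
  · intro S hS hSJ
    obtain ⟨_, _, _, x, hx⟩ := hSJ
    refine ⟨x, ?_⟩
    rintro F ⟨_, h1, ⟨y, h2⟩, _⟩ rfl
    have hx' : ∀ y, Sum.inrₗ y ∈ F → R x y := by
      intro y hy
      apply hx
      rw [mem_pPart]
      refine ⟨hy, ?_⟩
      rintro ⟨x', h⟩
      exact inl_ne_inr' x' y h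
    obtain ⟨b, hb⟩ := hS
    have hb' : ∃ y, b = Sum.inrₗ y ∧ Sum.inrₗ y ∈ F := by
      rw [mem_pPart] at hb
      rcases b with x | y
      · exact absurd ⟨x, rfl⟩ hb.2
      · exact ⟨y, rfl, hb.1⟩
    obtain ⟨y0, _, hy0⟩ := hb'
    refine ⟨Finset.insert_nonempty _ _, ?_, ⟨y0, ?_⟩, ⟨x, ?_⟩⟩
    · intro a b ha hb
      rw [Finset.mem_insert, embL_apply] at ha hb
      have hb := hb.resolve_left (inl_ne_inr' _ _).symm
      rcases ha with ha | ha
      · rw [inl_inj'.mp ha]; exact hx' b hb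
      · exact h1 a b ha hb
    · intro a ha
      rw [Finset.mem_insert, embL_apply] at ha
      rcases ha with ha | ha
      · rw [inl_inj'.mp ha]; exact hx' _ hy0
      · exact h1 a _ ha hy0
    · intro b hb
      rw [Finset.mem_insert, embL_apply] at hb
      exact hx' b (hb.resolve_left (inl_ne_inr' _ _).symm)
  · intro F
    have hl : ∀ x, (Sum.inlₗ x : X ⊕ₗ Y) ∈ F.map embL.toEmbedding ↔ x ∈ F := fun x =>
      Finset.mem_map' (embL (X := X) (Y := Y)).toEmbedding
    have hr : ∀ y, (Sum.inrₗ y : X ⊕ₗ Y) ∉ F.map embL.toEmbedding := by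
      intro y hy
      rw [Finset.mem_map] at hy
      obtain ⟨x, _, h⟩ := hy
      exact inl_ne_inr' x y h
    constructor
    · rintro ⟨hne, _, ⟨y, hy⟩, _⟩
      exact ⟨by simpa using hne, y, fun x hx => hy x ((hl x).mpr hx)⟩
    · rintro ⟨hne, y, hy⟩
      obtain ⟨x0, hx0⟩ := hne
      exact ⟨⟨_, (hl x0).mpr hx0⟩, fun x y _ h => absurd h (hr y),
        ⟨y, fun x hx => hy x ((hl x).mp hx)⟩, ⟨x0, fun y h => absurd h (hr y)⟩⟩

lemma dowker_right (j : ℕ) :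
    Nonempty (↥(sHred k (dowkerC (fun y x => R x y)) j) ≃ₗ[k] ↥(sHred k (joinC R) j)) := by
  classical
  apply sHred_iso k embR _ _ _ (joinC_down R)
  · intro S hS hSJ
    obtain ⟨_, _, ⟨y, hy⟩, _⟩ := hSJ
    refine ⟨y, ?_⟩
    rintro F ⟨_, h1, _, ⟨x, h2⟩⟩ rfl
    have hy' : ∀ x, Sum.inlₗ x ∈ F → R x y := by
      intro x hx
      apply hy
      rw [mem_pPart]
      refine ⟨hx, ?_⟩
      rintro ⟨y', h⟩
      exact inl_ne_inr' x y' h.symm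
    obtain ⟨b, hb⟩ := hS
    have hb' : ∃ x, b = Sum.inlₗ x ∧ Sum.inlₗ x ∈ F := by
      rw [mem_pPart] at hb
      rcases b with x | y
      · exact ⟨x, rfl, hb.1⟩
      · exact absurd ⟨y, rfl⟩ hb.2
    obtain ⟨x0, _, hx0⟩ := hb'
    refine ⟨Finset.insert_nonempty _ _, ?_, ⟨y, ?_⟩, ⟨x0, ?_⟩⟩
    · intro a b ha hb
      rw [Finset.mem_insert, embR_apply] at ha hb
      have ha := ha.resolve_left (inl_ne_inr' _ _)
      rcases hb with hb | hb
      · rw [inr_inj'.mp hb]; exact hy' a ha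
      · exact h1 a b ha hb
    · intro a ha
      rw [Finset.mem_insert, embR_apply] at ha
      exact hy' a (ha.resolve_left (inl_ne_inr' _ _))
    · intro b hb
      rw [Finset.mem_insert, embR_apply] at hb
      rcases hb with hb | hb
      · rw [inr_inj'.mp hb]; exact hy' _ hx0
      · exact h1 _ b hx0 hb
  · intro F
    have hl : ∀ y, (Sum.inrₗ y : X ⊕ₗ Y) ∈ F.map embR.toEmbedding ↔ y ∈ F := fun y =>
      Finset.mem_map' (embR (X := X) (Y := Y)).toEmbedding
    have hr : ∀ x, (Sum.inlₗ x : X ⊕ₗ Y) ∉ F.map embR.toEmbedding := by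
      intro x hx
      rw [Finset.mem_map] at hx
      obtain ⟨y, _, h⟩ := hx
      exact inl_ne_inr' x y h.symm
    constructor
    · rintro ⟨hne, _, _, ⟨x, hx⟩⟩
      exact ⟨by simpa using hne, x, fun y hy => hx y ((hl y).mpr hy)⟩
    · rintro ⟨hne, x, hx⟩
      obtain ⟨y0, hy0⟩ := hne
      exact ⟨⟨_, (hl y0).mpr hy0⟩, fun x y h _ => absurd h (hr x),
        ⟨y0, fun x h => absurd h (hr x)⟩, ⟨x, fun y hy => hx y ((hl y).mp hy)⟩⟩

end Dowker

/-- For all `j ≥ 0` and all `m ∈ S`, the reduced simplicial homology groups over the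
field `k` satisfy `H̃_j(∇_m) ≅ H̃_j(Δ_m)`. -/
theorem homology_nabla_iso_homology_delta
    {G : Type} [AddCommGroup G] (k : Type) [Field k]
    (S : AddSubmonoid G) (hFG : S.FG) (hcf : ∀ g ∈ S, -g ∈ S → g = 0)
    {r : ℕ} (n : Fin r → G) (hn : ∀ i, n i ≠ 0)
    (hgen : S = AddSubmonoid.closure (Set.range n))
    (m : G) (hm : m ∈ S) :
    ∀ j : ℕ, Nonempty
      (↥(sHred k (nablaLex n m) j) ≃ₗ[k] ↥(sHred k (deltaComplex S n m) j)) := by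
  intro j
  classical
  let R : Lex (Fin r →₀ ℕ) → Fin r → Prop := fun a i =>
    ((ofLex a).sum fun i e => e • n i) = m ∧ 0 < ofLex a i
  have h1 : nablaLex n m = dowkerC R := by
    ext F
    constructor
    · rintro ⟨hne, ha, i, hi⟩
      exact ⟨hne, i, fun a h => ⟨ha a h, hi a h⟩⟩
    · rintro ⟨hne, i, hi⟩
      exact ⟨hne, fun a h => (hi a h).1, i, fun a h => (hi a h).2⟩
  have hsum : ∀ a : Fin r →₀ ℕ, (a.sum fun i e => e • n i) = ∑ i, a i • n i := fun a =>
    Finsupp.sum_fintype _ _ (by simp)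
  have h2 : deltaComplex S n m = dowkerC (fun i a => R a i) := by
    ext F
    constructor
    · rintro ⟨hne, s, hs, hsm⟩
      rw [hgen] at hs
      obtain ⟨b, hb⟩ : ∃ b : Fin r → ℕ, ∑ i, b i • n i = s := by
        clear hsm
        induction hs using AddSubmonoid.closure_induction with
        | mem x hx =>
          obtain ⟨i, rfl⟩ := hx
          exact ⟨Pi.single i 1, by simp [Pi.single_apply]⟩
        | zero => exact ⟨0, by simp⟩
        | add x y _ _ hx hy =>
          obtain ⟨b, rfl⟩ := hx
          obtain ⟨c, rfl⟩ := hy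
          exact ⟨b + c, by simp [add_smul, Finset.sum_add_distrib]⟩
      refine ⟨hne, toLex (Finsupp.equivFunOnFinite.symm fun i => b i + if i ∈ F then 1 else 0), ?_⟩
      intro i hi
      refine ⟨?_, ?_⟩
      · rw [hsum]
        simp only [ofLex_toLex, Finsupp.coe_equivFunOnFinite_symm, add_smul,
          Finset.sum_add_distrib, hb, ite_smul, one_smul, zero_smul]
        rw [← hsm, add_comm]
        simp
      · simp [hi]
    · rintro ⟨hne, a, ha⟩
      refine ⟨hne, ∑ i, (ofLex a i - if i ∈ F then 1 else 0) • n i, ?_, ?_⟩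
      · apply AddSubmonoid.sum_mem
        intro i _
        apply AddSubmonoid.nsmul_mem
        rw [hgen]
        exact AddSubmonoid.subset_closure ⟨i, rfl⟩
      · obtain ⟨i0, hi0⟩ := hne
        rw [← (ha i0 hi0).1, hsum]
        have : ∑ i ∈ F, n i = ∑ i, (if i ∈ F then 1 else 0) • n i := by simp
        rw [this, ← Finset.sum_add_distrib]
        apply Finset.sum_congr rfl
        intro i _
        rw [← add_smul]
        congr 1
        split_ifs with h
        · have := (ha i h).2; omega
        · omega
  rw [h1, h2]
  obtain ⟨e1⟩ := dowker_left k R j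
  obtain ⟨e2⟩ := dowker_right k R j
  exact ⟨e1.trans e2.symm⟩
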